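/- arXiv:1602.01678 — 2 statements merged into one kernel-verified Lean document; each statement's English description precedes it below -/
import Mathlib

section
/- (Rigid-supersymmetry reduction, eq. (3.13).) Under the stated rigid hypotheses, the X- and F-dependent part of the effective Lagrangian reduces pointwise to the Volkov–Akulov-type expression: (F + f)(F̄ + f) + X·(□X̄) = (1/(4f²))·c·(□c̄) − (1/(16f⁶))·c·c̄·(□c)·(□c̄) at every point of ℝ⁴. (Modulo total derivatives this is the quartic-fermion Lagrangian ℒ = −½χ̄∂̸χ − f² + (1/4f²)χ̄²□χ² − (1/16f⁶)χ²χ̄²(□χ²)(□χ̄²) obtained after eliminating the auxiliary field F, the spinor kinetic term −½χ̄∂̸χ and the constant −f² being unaffected by the reduction.) -/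
open scoped BigOperators

/-- Partial derivative of a `Λ`-valued function on `ℝ⁴` in the `i`-th coordinate
direction. -/
noncomputable def pd {Λ : Type*} [NormedAddCommGroup Λ] [NormedSpace ℝ Λ]
    (i : Fin 4) (u : (Fin 4 → ℝ) → Λ) : (Fin 4 → ℝ) → Λ :=
  fun x => fderiv ℝ u x (Pi.single i 1)

/-- The flat d'Alembertian `□u = η^{μν} ∂_μ ∂_ν u` with `η = diag(−1,1,1,1)`. -/
noncomputable def box {Λ : Type*} [NormedAddCommGroup Λ] [NormedSpace ℝ Λ]
    (u : (Fin 4 → ℝ) → Λ) : (Fin 4 → ℝ) → Λ :=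
  fun x => ∑ μ : Fin 4, (if μ = 0 then (-1 : ℝ) else 1) • pd μ (pd μ u) x

section helpers

variable {Λ : Type*} [NormedCommRing Λ] [NormedAlgebra ℝ Λ]

open Asymptotics Filter Topology in
lemma hasFDerivAt_inv_aux {F G : (Fin 4 → ℝ) → Λ} (hFG : ∀ x, F x * G x = 1)
    (x : Fin 4 → ℝ) {L : (Fin 4 → ℝ) →L[ℝ] Λ} (hL : HasFDerivAt F L x) :
    HasFDerivAt G (-((ContinuousLinearMap.mul ℝ Λ (G x * G x)).comp L)) x := by
  have key : ∀ y, G y - G x = -(G x * G y * (F y - F x)) := fun y => by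
    linear_combination (-G y) * hFG x + G x * hFG y
  have hFc : Tendsto (fun y => F y - F x) (𝓝 x) (𝓝 0) := by
    have := hL.continuousAt.tendsto.sub_const (F x)
    simpa using this
  have hbd : G =O[𝓝 x] (fun _ => (1 : ℝ)) := by
    have hsm : ∀ᶠ y in 𝓝 x, ‖G x‖ * ‖F y - F x‖ < 1 / 2 := by
      have : Tendsto (fun y => ‖G x‖ * ‖F y - F x‖) (𝓝 x) (𝓝 (‖G x‖ * ‖(0:Λ)‖)) :=
        hFc.norm.const_mul _
      rw [norm_zero, mul_zero] at this
      exact this.eventually (gt_mem_nhds (by norm_num))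
    refine IsBigO.of_bound (2 * ‖G x‖) ?_
    filter_upwards [hsm] with y hy
    have h1 : G y = G x - G x * (F y - F x) * G y := by linear_combination key y
    have h2 : ‖G y‖ ≤ ‖G x‖ + ‖G x‖ * ‖F y - F x‖ * ‖G y‖ := by
      calc ‖G y‖ = ‖G x - G x * (F y - F x) * G y‖ := by rw [← h1]
        _ ≤ ‖G x‖ + ‖G x * (F y - F x) * G y‖ := norm_sub_le _ _
        _ ≤ _ := by
          gcongr
          refine (norm_mul_le _ _).trans ?_
          gcongr
          exact norm_mul_le _ _
    have := norm_nonneg (G y)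
    simp only [norm_one, mul_one]
    nlinarith
  have hO : (fun y => F y - F x) =O[𝓝 x] (fun y => y - x) := hL.isBigO_sub
  have hFo : (fun y => F y - F x) =o[𝓝 x] (fun _ => (1 : ℝ)) :=
    (isLittleO_one_iff ℝ).2 hFc
  have hGo : (fun y => G y - G x) =o[𝓝 x] (fun _ => (1 : ℝ)) := by
    have h := ((hbd.const_mul_left (G x)).mul_isLittleO hFo).neg_left
    simp only [mul_one] at h
    exact h.congr_left (fun y => (key y).symm)
  refine HasFDerivAt.of_isLittleO ?_
  have h1 : (fun y => G x * G y * (F y - F x - L (y - x))) =o[𝓝 x] (fun y => ‖y - x‖) := by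
    have := (hbd.const_mul_left (G x)).mul_isLittleO hL.isLittleO.norm_right
    simpa only [one_mul] using this
  have h2 : (fun y => G x * ((G y - G x) * L (y - x))) =o[𝓝 x] (fun y => ‖y - x‖) := by
    have := (hGo.mul_isBigO (L.isBigO_sub (𝓝 x) x).norm_right).const_mul_left (G x)
    simpa only [one_mul] using this
  refine ((h1.neg_left.sub h2).of_norm_right).congr_left (fun y => ?_)
  simp only [neg_apply, ContinuousLinearMap.neg_apply, ContinuousLinearMap.comp_apply, ContinuousLinearMap.mul_apply']
  linear_combination -key y

lemma contDiff_inv_aux {F G : (Fin 4 → ℝ) → Λ} (hFG : ∀ x, F x * G x = 1)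
    (hF : ContDiff ℝ (⊤ : ℕ∞) F) : ContDiff ℝ (⊤ : ℕ∞) G := by
  have hd : ∀ x, HasFDerivAt G (-((ContinuousLinearMap.mul ℝ Λ (G x * G x)).comp (fderiv ℝ F x))) x :=
    fun x => hasFDerivAt_inv_aux hFG x (hF.differentiable (by simp) x).hasFDerivAt
  rw [contDiff_infty]
  intro n
  induction n with
  | zero =>
    exact contDiff_zero.2 (continuous_iff_continuousAt.2 fun x => (hd x).continuousAt)
  | succ n ih =>
    push_cast
    rw [contDiff_succ_iff_fderiv]
    refine ⟨fun x => (hd x).differentiableAt, by simp, ?_⟩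
    have : fderiv ℝ G = fun x => -((ContinuousLinearMap.mul ℝ Λ (G x * G x)).comp (fderiv ℝ F x)) :=
      funext fun x => (hd x).fderiv
    rw [this]
    have hF' : ContDiff ℝ n (fderiv ℝ F) := hF.fderiv_right (by exact_mod_cast le_top)
    exact (((ContinuousLinearMap.mul ℝ Λ).contDiff.comp (ih.mul ih)).clm_comp hF').neg

lemma pd_contDiff (i : Fin 4) {u : (Fin 4 → ℝ) → Λ} (hu : ContDiff ℝ (⊤ : ℕ∞) u) :
    ContDiff ℝ (⊤ : ℕ∞) (pd i u) := by
  have : ContDiff ℝ (⊤ : ℕ∞) (fderiv ℝ u) := hu.fderiv_right (by simp)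
  exact this.clm_apply contDiff_const

lemma box_contDiff {u : (Fin 4 → ℝ) → Λ} (hu : ContDiff ℝ (⊤ : ℕ∞) u) :
    ContDiff ℝ (⊤ : ℕ∞) (box u) := by
  unfold box
  exact ContDiff.sum fun i _ => (pd_contDiff i (pd_contDiff i hu)).const_smul _

lemma pd_mul (i : Fin 4) {u v : (Fin 4 → ℝ) → Λ} (hu : ContDiff ℝ (⊤ : ℕ∞) u)
    (hv : ContDiff ℝ (⊤ : ℕ∞) v) :
    pd i (fun x => u x * v x) = fun x => pd i u x * v x + u x * pd i v x := by
  funext x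
  have h := ((hu.differentiable (by simp) x).hasFDerivAt.mul
    (hv.differentiable (by simp) x).hasFDerivAt).fderiv
  unfold pd
  erw [h]
  simp
  ring

lemma pd_add (i : Fin 4) {u v : (Fin 4 → ℝ) → Λ} (hu : ContDiff ℝ (⊤ : ℕ∞) u)
    (hv : ContDiff ℝ (⊤ : ℕ∞) v) :
    pd i (fun x => u x + v x) = fun x => pd i u x + pd i v x := by
  funext x
  have h := ((hu.differentiable (by simp) x).hasFDerivAt.add
    (hv.differentiable (by simp) x).hasFDerivAt).fderiv
  unfold pd
  erw [h]
  simp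

lemma pd_const (i : Fin 4) (k : Λ) : pd i (fun _ => k) = fun _ => 0 := by
  funext x
  simp [pd]

lemma pd_pd_mul (i : Fin 4) {u v : (Fin 4 → ℝ) → Λ} (hu : ContDiff ℝ (⊤ : ℕ∞) u)
    (hv : ContDiff ℝ (⊤ : ℕ∞) v) :
    pd i (pd i (fun x => u x * v x)) = fun x => pd i (pd i u) x * v x
      + 2 * (pd i u x * pd i v x) + u x * pd i (pd i v) x := by
  have hu' := pd_contDiff i hu
  have hv' := pd_contDiff i hv
  rw [pd_mul i hu hv, pd_add i (hu'.mul hv) (hu.mul hv'), pd_mul i hu' hv, pd_mul i hu hv']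
  funext x
  ring

/-- One index of the contraction. Here `M = G²/2 · □X̄`. -/
lemma step_index (i : Fin 4) (h2 a : Λ) (hh : 2 * h2 = 1) {c cb Fb Gb Xb M : (Fin 4 → ℝ) → Λ}
    (hc : ContDiff ℝ (⊤ : ℕ∞) c) (hcb : ContDiff ℝ (⊤ : ℕ∞) cb)
    (hFb : ContDiff ℝ (⊤ : ℕ∞) Fb) (hGb : ContDiff ℝ (⊤ : ℕ∞) Gb)
    (hM : ContDiff ℝ (⊤ : ℕ∞) M)
    (hFG : ∀ x, Fb x * Gb x = 1) (hc2 : ∀ x, c x * c x = 0)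
    (hXb : ∀ x, 2 * Xb x = cb x * Gb x) (hXbs : ContDiff ℝ (⊤ : ℕ∞) Xb)
    (heom : ∀ x, Fb x + a = c x * M x) (x : Fin 4 → ℝ) :
    2 * (c x * pd i (pd i Xb) x) = c x * pd i (pd i cb) x * Gb x
      - c x * cb x * Gb x ^ 2 * (pd i (pd i c) x * M x) := by
  have e1 : c x * pd i c x = 0 := by
    have := congrFun (congrArg (pd i) (funext hc2)) x
    rw [pd_mul i hc hc, pd_const] at this
    simp only at this
    linear_combination h2 * this - c x * pd i c x * hh
  have hF : (fun y => Fb y) = fun y => c y * M y + (-a) := by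
    funext y
    linear_combination heom y
  have hcM := hc.mul hM
  have hD : pd i Fb = fun y => pd i c y * M y + c y * pd i M y := by
    change pd i (fun y => Fb y) = _
    rw [hF, pd_add i hcM contDiff_const, pd_mul i hc hM, pd_const]
    simp
  have hDD : pd i (pd i Fb) = pd i (pd i (fun y => c y * M y)) := by
    rw [hD, pd_mul i hc hM]
  have e2 : c x * pd i Fb x = 0 := by
    rw [hD]
    linear_combination M x * e1 + pd i M x * hc2 x
  have e3 : c x * pd i (pd i Fb) x = c x * pd i (pd i c) x * M x := by
    rw [hDD, pd_pd_mul i hc hM]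
    linear_combination 2 * pd i M x * e1 + pd i (pd i M) x * hc2 x
  have g1 : pd i Fb x * Gb x + Fb x * pd i Gb x = 0 := by
    have := congrFun (congrArg (pd i) (funext hFG)) x
    rw [pd_mul i hFb hGb, pd_const] at this
    exact this
  have g2 : pd i (pd i Fb) x * Gb x + 2 * (pd i Fb x * pd i Gb x) + Fb x * pd i (pd i Gb) x = 0 := by
    have := congrFun (congrArg (pd i) (congrArg (pd i) (funext hFG))) x
    rw [pd_pd_mul i hFb hGb, pd_const, pd_const] at this
    exact this
  have e4 : c x * pd i Gb x = 0 := by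
    linear_combination (-c x * pd i Gb x) * hFG x + c x * Gb x * g1 - Gb x ^ 2 * e2
  have e5 : c x * pd i (pd i Gb) x = - (Gb x ^ 2 * (c x * pd i (pd i Fb) x)) := by
    linear_combination (-c x * pd i (pd i Gb) x) * hFG x + c x * Gb x * g2
      - 2 * Gb x * pd i Gb x * e2
  have e6 : 2 * pd i (pd i Xb) x = pd i (pd i cb) x * Gb x
      + 2 * (pd i cb x * pd i Gb x) + cb x * pd i (pd i Gb) x := by
    have := congrFun (congrArg (pd i) (congrArg (pd i) (funext hXb))) x
    rw [pd_pd_mul i hcb hGb, pd_pd_mul i contDiff_const hXbs, pd_const, pd_const] at this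
    simpa using this
  linear_combination c x * e6 + 2 * pd i cb x * e4 + cb x * e5 - cb x * Gb x ^ 2 * e3

lemma step_box (h2 a : Λ) (hh : 2 * h2 = 1) {c cb Fb Gb Xb M : (Fin 4 → ℝ) → Λ}
    (hc : ContDiff ℝ (⊤ : ℕ∞) c) (hcb : ContDiff ℝ (⊤ : ℕ∞) cb)
    (hFb : ContDiff ℝ (⊤ : ℕ∞) Fb) (hGb : ContDiff ℝ (⊤ : ℕ∞) Gb)
    (hM : ContDiff ℝ (⊤ : ℕ∞) M)
    (hFG : ∀ x, Fb x * Gb x = 1) (hc2 : ∀ x, c x * c x = 0)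
    (hXb : ∀ x, 2 * Xb x = cb x * Gb x) (hXbs : ContDiff ℝ (⊤ : ℕ∞) Xb)
    (heom : ∀ x, Fb x + a = c x * M x) (x : Fin 4 → ℝ) :
    2 * (c x * box Xb x) = c x * box cb x * Gb x
      - c x * cb x * Gb x ^ 2 * (box c x * M x) := by
  have h := fun i => step_index i h2 a hh hc hcb hFb hGb hM hFG hc2 hXb hXbs heom x
  simp only [box, Fin.sum_univ_four, Algebra.smul_def]
  simp
  linear_combination -h 0 + h 1 + h 2 + h 3

lemma final_alg (c cb F Fb G Gb P Q p q a i h : Λ) (hh : 2 * h = 1) (hai : a * i = 1)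
    (hc : c * c = 0) (hcb : cb * cb = 0) (hFG : F * G = 1) (hFGb : Fb * Gb = 1)
    (e1 : F + a = cb * (h * Gb ^ 2 * P)) (e2 : Fb + a = c * (h * G ^ 2 * Q))
    (l1 : 2 * (c * Q) = c * q * Gb - c * cb * Gb ^ 2 * (p * (h * G ^ 2 * Q)))
    (l2 : 2 * (cb * P) = cb * p * G - cb * c * G ^ 2 * (q * (h * Gb ^ 2 * P))) :
    (F + a) * (Fb + a) + h * (c * G) * Q
      = h ^ 2 * i ^ 2 * (c * q) - h ^ 4 * i ^ 6 * (c * cb * p * q) := by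
  have a1 : cb * F = - (a * cb) := by linear_combination cb * e1 + (h * Gb ^ 2 * P) * hcb
  have a2 : c * Fb = - (a * c) := by linear_combination c * e2 + (h * G ^ 2 * Q) * hc
  have b1 : cb * G = - (i * cb) := by
    linear_combination -(cb * G) * hai + i * G * a1 - i * cb * hFG
  have b2 : c * Gb = - (i * c) := by
    linear_combination -(c * Gb) * hai + i * Gb * a2 - i * c * hFGb
  have d1 : cb * G ^ 2 = i ^ 2 * cb := by linear_combination (G - i) * b1
  have d2 : c * Gb ^ 2 = i ^ 2 * c := by linear_combination (Gb - i) * b2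
  have k1 : c * cb * Q = - (h * i * (c * cb * q)) := by
    linear_combination (h * cb) * l1 - c * cb * Q * hh + h * q * cb * b2
      - h * c * Gb ^ 2 * (p * (h * G ^ 2 * Q)) * hcb
  have k2 : c * cb * P = - (h * i * (c * cb * p)) := by
    linear_combination (h * c) * l2 - c * cb * P * hh + h * p * c * b1
      - h * cb * G ^ 2 * (q * (h * Gb ^ 2 * P)) * hc
  have m1 : c * cb * Gb ^ 2 * G ^ 2 = i ^ 4 * (c * cb) := by
    linear_combination cb * G ^ 2 * d2 + i ^ 2 * c * d1
  have k3 : c * Q = - (h * i * (c * q)) + h ^ 3 * i ^ 5 * (c * cb * p * q) := by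
    linear_combination h * l1 - c * Q * hh + h * q * b2 - h ^ 2 * p * Q * m1
      - h ^ 2 * i ^ 4 * p * k1
  have k4 : c * F = - (a * c) - h ^ 2 * i ^ 3 * (c * cb * p) := by
    linear_combination c * e1 + h * cb * P * d2 + h * i ^ 2 * k2
  have k5 : c * G = - (i * c) + h ^ 2 * i ^ 5 * (c * cb * p) := by
    linear_combination -(c * G) * hai + i * G * k4 - i * c * hFG
      - h ^ 2 * i ^ 4 * c * p * b1
  have k6 : (F + a) * (Fb + a) = h ^ 4 * i ^ 6 * (c * cb * p * q) := by
    rw [e1, e2]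
    linear_combination h ^ 2 * P * Q * m1 + h ^ 2 * i ^ 4 * P * k1 - h ^ 3 * i ^ 5 * q * k2
  have k7 : h * (c * G) * Q = h ^ 2 * i ^ 2 * (c * q) - 2 * h ^ 4 * i ^ 6 * (c * cb * p * q) := by
    linear_combination h * G * k3 - h ^ 2 * i * q * k5 + h ^ 4 * i ^ 5 * c * p * q * b1
  linear_combination k6 + k7

end helpers

/-- **Rigid-supersymmetry reduction, eq. (3.13).** After eliminating the
auxiliary field, the `X`- and `F`-dependent part of the Lagrangian reduces to
the Volkov–Akulov-type expression
`(F+f)(F̄+f) + X □X̄ = (1/4f²) χ² □χ̄² − (1/16f⁶) χ² χ̄² (□χ²)(□χ̄²)`. -/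
theorem rigid_reduction
    {Λ : Type*} [NormedCommRing Λ] [NormedAlgebra ℝ Λ]
    (f : ℝ) (hf0 : f ≠ 0)
    (c cb F Fb : (Fin 4 → ℝ) → Λ)
    (hc : ContDiff ℝ (⊤ : ℕ∞) c) (hcb : ContDiff ℝ (⊤ : ℕ∞) cb)
    (hF : ContDiff ℝ (⊤ : ℕ∞) F) (hFb : ContDiff ℝ (⊤ : ℕ∞) Fb)
    -- nilpotency of the fermion bilinears χ², χ̄²
    (hc2 : ∀ x, c x * c x = 0) (hcb2 : ∀ x, cb x * cb x = 0)
    -- invertibility of the auxiliary fields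
    (hFU : ∀ x, IsUnit (F x)) (hFbU : ∀ x, IsUnit (Fb x))
    -- the constrained scalars X = χ²/(2F), X̄ = χ̄²/(2F̄)
    (X Xb : (Fin 4 → ℝ) → Λ)
    (hX : ∀ x, X x = (2 : ℝ)⁻¹ • (c x * Ring.inverse (F x)))
    (hXb : ∀ x, Xb x = (2 : ℝ)⁻¹ • (cb x * Ring.inverse (Fb x)))
    -- the auxiliary-field equations of motion:
    -- F + f = X̄ F̄⁻¹ (□X) and F̄ + f = X F⁻¹ (□X̄)
    (heom : ∀ x, F x + algebraMap ℝ Λ f = Xb x * Ring.inverse (Fb x) * box X x)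
    (heomb : ∀ x, Fb x + algebraMap ℝ Λ f = X x * Ring.inverse (F x) * box Xb x)
    :
    ∀ x, (F x + algebraMap ℝ Λ f) * (Fb x + algebraMap ℝ Λ f) + X x * box Xb x
      = (4 * f ^ 2)⁻¹ • (c x * box cb x)
        - (16 * f ^ 6)⁻¹ • (c x * cb x * box c x * box cb x) := by
  have hh : (2 : Λ) * algebraMap ℝ Λ 2⁻¹ = 1 := by
    rw [← map_ofNat (algebraMap ℝ Λ) 2, ← map_mul]
    norm_num
  have hai : algebraMap ℝ Λ f * algebraMap ℝ Λ f⁻¹ = 1 := by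
    rw [← map_mul, mul_inv_cancel₀ hf0, map_one]
  set h2 := algebraMap ℝ Λ 2⁻¹ with hh2
  set G : (Fin 4 → ℝ) → Λ := fun x => Ring.inverse (F x) with hG
  set Gb : (Fin 4 → ℝ) → Λ := fun x => Ring.inverse (Fb x) with hGb
  have hFG : ∀ x, F x * G x = 1 := fun x => Ring.mul_inverse_cancel _ (hFU x)
  have hFGb : ∀ x, Fb x * Gb x = 1 := fun x => Ring.mul_inverse_cancel _ (hFbU x)
  have sG := contDiff_inv_aux hFG hF
  have sGb := contDiff_inv_aux hFGb hFb
  have hX' : ∀ x, X x = h2 * (c x * G x) := fun x => by rw [hX, Algebra.smul_def]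
  have hXb' : ∀ x, Xb x = h2 * (cb x * Gb x) := fun x => by rw [hXb, Algebra.smul_def]
  have sX : ContDiff ℝ (⊤ : ℕ∞) X := by
    rw [funext hX']
    exact contDiff_const.mul (hc.mul sG)
  have sXb : ContDiff ℝ (⊤ : ℕ∞) Xb := by
    rw [funext hXb']
    exact contDiff_const.mul (hcb.mul sGb)
  have e1 : ∀ x, F x + algebraMap ℝ Λ f = cb x * (h2 * Gb x ^ 2 * box X x) := fun x => by
    rw [heom x, hXb' x]
    ring
  have e2 : ∀ x, Fb x + algebraMap ℝ Λ f = c x * (h2 * G x ^ 2 * box Xb x) := fun x => by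
    rw [heomb x, hX' x]
    ring
  have l1 := step_box h2 _ hh hc hcb hFb sGb
    ((contDiff_const.mul (sG.pow 2)).mul (box_contDiff sXb)) hFGb hc2
    (fun x => by linear_combination 2 * hXb' x + cb x * Gb x * hh) sXb e2
  have l2 := step_box h2 _ hh hcb hc hF sG
    ((contDiff_const.mul (sGb.pow 2)).mul (box_contDiff sX)) hFG hcb2
    (fun x => by linear_combination 2 * hX' x + c x * G x * hh) sX e1
  intro x
  have key := final_alg (c x) (cb x) (F x) (Fb x) (G x) (Gb x) (box X x) (box Xb x) (box c x)
    (box cb x) _ _ h2 hh hai (hc2 x) (hcb2 x) (hFG x) (hFGb x) (e1 x) (e2 x) (l1 x) (l2 x)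
  rw [hX' x, key, Algebra.smul_def, Algebra.smul_def, hh2]
  simp only [← map_pow, ← map_mul]
  congr 3
  · congr 1
    field_simp
    norm_num
  · congr 1
    field_simp
    norm_num
end

section
/- (Eqs. (4.17)–(4.20): reduction of the X-dependent terms.) Under the stated hypotheses, the following pointwise identity holds on ℝ⁴: X̄·(A X) + X·B̄ + B·X̄ = Ȳ·(A Y) + Y·B̄ + B·Ȳ − 2·f f̄·𝒜·𝒜̄, where 𝒜 := (f f̄)⁻¹ Ȳ (A Y + B) and 𝒜̄ := (f f̄)⁻¹ Y (Ā Ȳ + B̄); i.e. the correction terms from X = Y(1 − 𝒜), X̄ = Ȳ(1 − 𝒜̄) combine to −2 f f̄ 𝒜 𝒜̄. -/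
open scoped BigOperators

/-- The second-order kinetic operator
`A u = e⁻¹ ∂_μ (e g^{μν} ∂_ν u) + i t^μ ∂_μ u + (i/2) e⁻¹ ∂_μ (e t^μ) u + r u`
of eq. (4.2). The conjugate operator `Ā` is `Aop e g (-t) r`. -/
noncomputable def Aop {Λ : Type*} [NormedCommRing Λ] [NormedAlgebra ℂ Λ]
    (e : (Fin 4 → ℝ) → ℝ) (g : (Fin 4 → ℝ) → Fin 4 → Fin 4 → ℝ)
    (t : (Fin 4 → ℝ) → Fin 4 → ℝ) (r : (Fin 4 → ℝ) → ℝ)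
    (u : (Fin 4 → ℝ) → Λ) : (Fin 4 → ℝ) → Λ :=
  fun x =>
    (e x)⁻¹ • (∑ μ : Fin 4, pd μ (fun y => e y • ∑ ν : Fin 4, g y μ ν • pd ν u y) x)
      + Complex.I • (∑ μ : Fin 4, t x μ • pd μ u x)
      + ((2 : ℝ)⁻¹ * (e x)⁻¹ *
          ∑ μ : Fin 4, fderiv ℝ (fun y => e y * t y μ) x (Pi.single μ 1)) •
          (Complex.I • u x)
      + r x • u x

section helpers

variable {Λ : Type*} [NormedCommRing Λ] [NormedAlgebra ℂ Λ]

lemma xt_cont_inv (u : (Fin 4 → ℝ) → Λ) (hu : Continuous u) (hU : ∀ x, IsUnit (u x)) :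
    Continuous (fun x => Ring.inverse (u x)) := by
  have key : ∀ x, ((Ring.inverse (u x) : Λ) : UniformSpace.Completion Λ)
      = Ring.inverse ((u x : Λ) : UniformSpace.Completion Λ) := by
    intro x
    obtain ⟨w, hw⟩ := hU x
    rw [← hw, Ring.inverse_unit]
    have : ((w : Λ) : UniformSpace.Completion Λ)
        = ((Units.map (UniformSpace.Completion.coeRingHom (α := Λ)).toMonoidHom w :
          (UniformSpace.Completion Λ)ˣ) : UniformSpace.Completion Λ) := rfl
    rw [this, Ring.inverse_unit]
    rfl
  rw [(UniformSpace.Completion.isUniformInducing_coe Λ).isInducing.continuous_iff]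
  have : ((fun a : Λ => (a : UniformSpace.Completion Λ)) ∘ fun x => Ring.inverse (u x))
      = fun x => Ring.inverse ((u x : Λ) : UniformSpace.Completion Λ) := funext key
  rw [continuous_iff_continuousAt]
  intro x
  change ContinuousAt ((fun a : Λ => (a : UniformSpace.Completion Λ)) ∘ fun x => Ring.inverse (u x)) x
  rw [this]
  have hx : IsUnit ((u x : Λ) : UniformSpace.Completion Λ) :=
    (hU x).map (UniformSpace.Completion.coeRingHom (α := Λ))
  obtain ⟨w, hw⟩ := hx
  have h1 := NormedRing.inverse_continuousAt w
  rw [hw] at h1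
  exact ContinuousAt.comp (f := fun x => ((u x : Λ) : UniformSpace.Completion Λ)) h1
    ((UniformSpace.Completion.continuous_coe Λ).comp hu).continuousAt

lemma xt_deriv_inv (u : (Fin 4 → ℝ) → Λ) (u' : (Fin 4 → ℝ) →L[ℝ] Λ) (x : Fin 4 → ℝ)
    (hu : Continuous u) (hU : ∀ x, IsUnit (u x)) (hd : HasFDerivAt u u' x) :
    HasFDerivAt (fun x => Ring.inverse (u x))
      ((ContinuousLinearMap.mul ℝ Λ (-(Ring.inverse (u x) * Ring.inverse (u x)))).comp u') x := by
  have hc := xt_cont_inv u hu hU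
  set v := fun x => Ring.inverse (u x) with hv
  have huv : ∀ y, u y * v y = 1 := fun y => Ring.mul_inverse_cancel _ (hU y)
  have h1 : (fun y => u y - u x - u' (y - x)) =o[nhds x] (fun y => y - x) := hd.isLittleO
  have h2 : (fun y => u y - u x) =O[nhds x] (fun y => y - x) := hd.isBigO_sub
  have h3 : (fun y => v y - v x) =o[nhds x] (fun _ => (1:ℝ)) := by
    rw [Asymptotics.isLittleO_one_iff]
    have := (hc.tendsto x).sub_const (v x)
    simpa using this
  have h4 : (fun y => (v y - v x) * (u y - u x)) =o[nhds x] (fun y => y - x) := by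
    have := h3.mul_isBigO h2.norm_right
    rw [← Asymptotics.isLittleO_norm_right]
    simpa using this
  have h5 := (h4.const_mul_left (-(v x))).add (h1.const_mul_left (-(v x * v x)))
  refine HasFDerivAt.of_isLittleO (h5.congr_left ?_)
  intro y
  simp only [ContinuousLinearMap.comp_apply, ContinuousLinearMap.mul_apply']
  change _ = v y - v x - (-(v x * v x) * u' (y - x))
  linear_combination (-(v x)) * huv y + v y * huv x

lemma xt_contDiff_inv (u : (Fin 4 → ℝ) → Λ) (hu : ContDiff ℝ (⊤ : ℕ∞) u)
    (hU : ∀ x, IsUnit (u x)) : ContDiff ℝ (⊤ : ℕ∞) (fun x => Ring.inverse (u x)) := by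
  rw [contDiff_infty]
  intro n
  induction n with
  | zero => exact contDiff_zero.2 (xt_cont_inv u hu.continuous hU)
  | succ n ih =>
    have hd : Differentiable ℝ u := hu.differentiable (by simp)
    have hfd : ContDiff ℝ n (fderiv ℝ u) :=
      (hu.of_le (by exact_mod_cast le_top) : ContDiff ℝ (n+1) u).fderiv_right le_rfl
    have := (contDiff_succ_iff_hasFDerivAt (𝕜 := ℝ) (n := n)
      (f := fun x => Ring.inverse (u x))).2
    push_cast
    refine this ⟨fun x => (ContinuousLinearMap.mul ℝ Λ
      (-(Ring.inverse (u x) * Ring.inverse (u x)))).comp (fderiv ℝ u x), ?_, ?_⟩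
    · exact ((ContinuousLinearMap.mul ℝ Λ).contDiff.comp (ih.mul ih).neg).clm_comp hfd
    · intro x
      exact xt_deriv_inv u _ x hu.continuous hU (hd x).hasFDerivAt

lemma xt_pd_smooth (i : Fin 4) (u : (Fin 4 → ℝ) → Λ) (hu : ContDiff ℝ (⊤ : ℕ∞) u) :
    ContDiff ℝ (⊤ : ℕ∞) (pd i u) := by
  unfold pd
  exact (hu.fderiv_right (m := (⊤ : ℕ∞)) (by simp)).clm_apply contDiff_const

lemma xt_pd_mul (i : Fin 4) (u v : (Fin 4 → ℝ) → Λ) (hu : ContDiff ℝ (⊤ : ℕ∞) u)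
    (hv : ContDiff ℝ (⊤ : ℕ∞) v) (x) :
    pd i (fun y => u y * v y) x = u x * pd i v x + v x * pd i u x := by
  unfold pd
  rw [fderiv_fun_mul (hu.differentiable (by simp) x) (hv.differentiable (by simp) x)]
  simp

lemma xt_pd_add (i : Fin 4) (u v : (Fin 4 → ℝ) → Λ) (hu : ContDiff ℝ (⊤ : ℕ∞) u)
    (hv : ContDiff ℝ (⊤ : ℕ∞) v) (x) :
    pd i (fun y => u y + v y) x = pd i u x + pd i v x := by
  unfold pd
  rw [fderiv_fun_add (hu.differentiable (by simp) x) (hv.differentiable (by simp) x)]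
  simp

lemma xt_pd_sub (i : Fin 4) (u v : (Fin 4 → ℝ) → Λ) (hu : ContDiff ℝ (⊤ : ℕ∞) u)
    (hv : ContDiff ℝ (⊤ : ℕ∞) v) (x) :
    pd i (fun y => u y - v y) x = pd i u x - pd i v x := by
  unfold pd
  rw [fderiv_fun_sub (hu.differentiable (by simp) x) (hv.differentiable (by simp) x)]
  simp

lemma xt_half_cancel (a : Λ) (h : a + a = 0) : a = 0 := by
  have h2 : (2 : ℝ) • a = 0 := by rw [two_smul, h]
  have := congrArg (fun b => (2 : ℝ)⁻¹ • b) h2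
  simpa [smul_smul] using this

lemma xt_pd_nil (i : Fin 4) (s : (Fin 4 → ℝ) → Λ) (hs : ContDiff ℝ (⊤ : ℕ∞) s)
    (h0 : ∀ x, s x * s x = 0) (x) : s x * pd i s x = 0 := by
  have h := xt_pd_mul i s s hs hs x
  have h1 : (fun y => s y * s y) = fun _ => 0 := funext h0
  rw [h1] at h
  apply xt_half_cancel
  rw [← h]
  simp [pd]

/-- flux -/
noncomputable def xtFlux (e : (Fin 4 → ℝ) → ℝ) (g : (Fin 4 → ℝ) → Fin 4 → Fin 4 → ℝ)
    (μ : Fin 4) (u : (Fin 4 → ℝ) → Λ) : (Fin 4 → ℝ) → Λ :=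
  fun y => e y • ∑ ν : Fin 4, g y μ ν • pd ν u y

variable (e : (Fin 4 → ℝ) → ℝ) (g : (Fin 4 → ℝ) → Fin 4 → Fin 4 → ℝ)
  (he : ContDiff ℝ (⊤ : ℕ∞) e) (hg : ContDiff ℝ (⊤ : ℕ∞) g)

include he hg in
lemma xt_flux_smooth (μ : Fin 4) (u : (Fin 4 → ℝ) → Λ) (hu : ContDiff ℝ (⊤ : ℕ∞) u) :
    ContDiff ℝ (⊤ : ℕ∞) (xtFlux e g μ u) := by
  unfold xtFlux
  refine he.smul (ContDiff.sum fun ν _ => ?_)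
  exact (contDiff_pi.1 (contDiff_pi.1 hg μ) ν).smul (xt_pd_smooth ν u hu)

lemma xt_flux_mul (μ : Fin 4) (u v : (Fin 4 → ℝ) → Λ) (hu : ContDiff ℝ (⊤ : ℕ∞) u)
    (hv : ContDiff ℝ (⊤ : ℕ∞) v) :
    xtFlux e g μ (fun y => u y * v y)
      = fun y => u y * xtFlux e g μ v y + v y * xtFlux e g μ u y := by
  funext y
  simp only [xtFlux, xt_pd_mul _ u v hu hv, mul_smul_comm, Finset.mul_sum, smul_add,
    Finset.sum_add_distrib]

lemma xt_flux_sub (μ : Fin 4) (u v : (Fin 4 → ℝ) → Λ) (hu : ContDiff ℝ (⊤ : ℕ∞) u)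
    (hv : ContDiff ℝ (⊤ : ℕ∞) v) :
    xtFlux e g μ (fun y => u y - v y)
      = fun y => xtFlux e g μ u y - xtFlux e g μ v y := by
  funext y
  simp only [xtFlux, xt_pd_sub _ u v hu hv, smul_sub, Finset.sum_sub_distrib]

lemma xt_flux_nil (μ : Fin 4) (s : (Fin 4 → ℝ) → Λ) (hs : ContDiff ℝ (⊤ : ℕ∞) s)
    (h0 : ∀ x, s x * s x = 0) (x) : s x * xtFlux e g μ s x = 0 := by
  simp only [xtFlux, mul_smul_comm, Finset.mul_sum, xt_pd_nil _ s hs h0, smul_zero,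
    Finset.sum_const_zero]

variable (r : (Fin 4 → ℝ) → ℝ)

lemma xt_Aop_eq (t : (Fin 4 → ℝ) → Fin 4 → ℝ) (u : (Fin 4 → ℝ) → Λ) (x) :
    Aop e g t r u x = (e x)⁻¹ • (∑ μ : Fin 4, pd μ (xtFlux e g μ u) x)
      + Complex.I • (∑ μ : Fin 4, t x μ • pd μ u x)
      + ((2 : ℝ)⁻¹ * (e x)⁻¹ *
          ∑ μ : Fin 4, fderiv ℝ (fun y => e y * t y μ) x (Pi.single μ 1)) •
          (Complex.I • u x)
      + r x • u x := rfl

include he hg in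
lemma xt_Aop_sub (t : (Fin 4 → ℝ) → Fin 4 → ℝ) (u v : (Fin 4 → ℝ) → Λ)
    (hu : ContDiff ℝ (⊤ : ℕ∞) u) (hv : ContDiff ℝ (⊤ : ℕ∞) v) (x) :
    Aop e g t r (fun y => u y - v y) x = Aop e g t r u x - Aop e g t r v x := by
  simp only [xt_Aop_eq, xt_flux_sub e g _ u v hu hv, xt_pd_sub _ u v hu hv,
    xt_pd_sub _ _ _ (xt_flux_smooth e g he hg _ u hu) (xt_flux_smooth e g he hg _ v hv),
    smul_sub, Finset.sum_sub_distrib]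
  abel

include he hg in
lemma xt_Aop_smooth (he0 : ∀ x, e x ≠ 0) (hr : ContDiff ℝ (⊤ : ℕ∞) r)
    (t : (Fin 4 → ℝ) → Fin 4 → ℝ) (ht : ContDiff ℝ (⊤ : ℕ∞) t) (u : (Fin 4 → ℝ) → Λ)
    (hu : ContDiff ℝ (⊤ : ℕ∞) u) : ContDiff ℝ (⊤ : ℕ∞) (Aop e g t r u) := by
  have hI : ∀ w : (Fin 4 → ℝ) → Λ, ContDiff ℝ (⊤ : ℕ∞) w →
      ContDiff ℝ (⊤ : ℕ∞) (fun x => Complex.I • w x) := fun w hw => hw.const_smul Complex.I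
  have htμ := contDiff_pi.1 ht
  have hei : ContDiff ℝ (⊤ : ℕ∞) (fun x => (e x)⁻¹) := he.inv he0
  have : Aop e g t r u = fun x => _ := funext (xt_Aop_eq e g r t u)
  rw [this]
  refine ContDiff.add (ContDiff.add (ContDiff.add ?_ ?_) ?_) (hr.smul hu)
  · exact hei.smul (ContDiff.sum fun μ _ => xt_pd_smooth _ _ (xt_flux_smooth e g he hg μ u hu))
  · exact hI _ (ContDiff.sum fun μ _ => (htμ μ).smul (xt_pd_smooth _ _ hu))
  · have hs : ContDiff ℝ (⊤ : ℕ∞) (fun x => (2 : ℝ)⁻¹ * (e x)⁻¹ *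
          ∑ μ : Fin 4, fderiv ℝ (fun y => e y * t y μ) x (Pi.single μ 1)) := by
      refine (contDiff_const.mul hei).mul (ContDiff.sum fun μ _ => ?_)
      exact ((he.mul (htμ μ)).fderiv_right (m := (⊤ : ℕ∞)) (by simp)).clm_apply contDiff_const
    have h := hs.smul (hI _ hu)
    exact h

include he hg in
lemma xt_key (t t' : (Fin 4 → ℝ) → Fin 4 → ℝ) (s v : (Fin 4 → ℝ) → Λ)
    (hs : ContDiff ℝ (⊤ : ℕ∞) s) (hv : ContDiff ℝ (⊤ : ℕ∞) v)
    (h0 : ∀ x, s x * s x = 0) (x) :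
    s x * Aop e g t r (fun y => s y * v y) x = v x * (s x * Aop e g t' r s x) := by
  have hn := fun i => xt_pd_nil i s hs h0 x
  have hfn := fun μ => xt_flux_nil e g μ s hs h0 x
  have hfs := fun μ => xt_flux_smooth e g he hg μ s hs
  have hfv := fun μ => xt_flux_smooth e g he hg μ v hv
  have h1 : ∀ i, s x * pd i (fun y => s y * v y) x = 0 := by
    intro i
    rw [xt_pd_mul i s v hs hv]
    linear_combination pd i v x * h0 x + v x * hn i
  have h2 : ∀ μ, s x * pd μ (xtFlux e g μ (fun y => s y * v y)) x
      = v x * (s x * pd μ (xtFlux e g μ s) x) := by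
    intro μ
    rw [xt_flux_mul e g μ s v hs hv, xt_pd_add _ _ _ (hs.mul (hfv μ)) (hv.mul (hfs μ)),
      xt_pd_mul _ _ _ hs (hfv μ), xt_pd_mul _ _ _ hv (hfs μ)]
    linear_combination pd μ (xtFlux e g μ v) x * h0 x + xtFlux e g μ v x * hn μ
      + pd μ v x * hfn μ
  have h3 : s x * (s x * v x) = 0 := by rw [← mul_assoc, h0, zero_mul]
  simp only [xt_Aop_eq, mul_add, mul_smul_comm, Finset.mul_sum, h1, h2, h3, h0, hn, smul_zero,
    mul_zero, Finset.sum_const_zero, add_zero]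

include he hg in
lemma xt_half (he0 : ∀ x, e x ≠ 0) (hr : ContDiff ℝ (⊤ : ℕ∞) r)
    (t t' : (Fin 4 → ℝ) → Fin 4 → ℝ) (ht : ContDiff ℝ (⊤ : ℕ∞) t)
    (X Xb Y Yb f fb F Fb i ib Ib B M : (Fin 4 → ℝ) → Λ)
    (hB : ContDiff ℝ (⊤ : ℕ∞) B)
    (hXs : ContDiff ℝ (⊤ : ℕ∞) X) (hYs : ContDiff ℝ (⊤ : ℕ∞) Y)
    (hYbs : ContDiff ℝ (⊤ : ℕ∞) Yb)
    (his : ContDiff ℝ (⊤ : ℕ∞) i) (hibs : ContDiff ℝ (⊤ : ℕ∞) ib)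
    (hi : ∀ x, f x * i x = 1) (hib : ∀ x, fb x * ib x = 1)
    (hF : ∀ x, IsUnit (F x)) (hIb : ∀ x, Fb x * Ib x = 1)
    (hXF : ∀ x, X x * F x = - (Y x * f x)) (hXFb : ∀ x, Xb x * Fb x = - (Yb x * fb x))
    (hYY : ∀ x, Y x * Y x = 0) (hYX : ∀ x, Y x * X x = 0)
    (hYYb : ∀ x, Yb x * Yb x = 0) (hXXb : ∀ x, Xb x * Xb x = 0)
    (heom : ∀ x, F x + f x = Xb x * Ib x * (Aop e g t r X x + B x))
    (heomb : ∀ x, Fb x + fb x = X x * M x) :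
    ∀ x, X x = Y x - i x * ib x * (Y x * Yb x * (Aop e g t r Y x + B x)) ∧
      Yb x * (Aop e g t r Y x - Aop e g t r X x) = (Y x - X x) * Aop e g t' r Yb x ∧
      Y x * (Yb x * (Aop e g t r Y x - Aop e g t r X x)) = 0 := by
  set V : (Fin 4 → ℝ) → Λ := fun x => Y x * (i x * ib x) * (Aop e g t r X x + B x) with hV
  have hVs : ContDiff ℝ (⊤ : ℕ∞) V :=
    (hYs.mul (his.mul hibs)).mul ((xt_Aop_smooth e g he hg r he0 hr t ht X hXs).add hB)
  have hW : ∀ x, Y x - X x = Yb x * V x := by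
    intro x
    set P := Aop e g t r X x + B x with hP
    have hYFb : Y x * Fb x = - (Y x * fb x) := by
      linear_combination Y x * heomb x + M x * hYX x
    have hE2 : (F x + f x) * (F x + f x) = 0 := by
      rw [heom x]; linear_combination (Ib x * P) ^ 2 * hXXb x
    have hX1 : X x = Y x + Y x * i x * (F x + f x) := by
      apply (hF x).mul_right_cancel
      linear_combination hXF x - Y x * i x * hE2 + Y x * (F x + f x) * hi x
    have hYIb : Y x * Ib x = - (Y x * ib x) := by
      linear_combination (ib x * Ib x) * hYFb - Y x * ib x * hIb x - Y x * Ib x * hib x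
    have hXb1 : Xb x = - (Yb x * fb x * Ib x) := by
      linear_combination Ib x * hXFb x - Xb x * hIb x
    have hq : Y x * Xb x * Ib x = - (Y x * Yb x * ib x) := by
      rw [hXb1]
      linear_combination (-(Yb x * fb x * Ib x) + Yb x * fb x * ib x) * hYIb
        - (Y x * Yb x * ib x) * hib x
    have : Yb x * V x = Yb x * (Y x * (i x * ib x) * P) := rfl
    rw [this]
    linear_combination -hX1 - Y x * i x * heom x - i x * P * hq
  have hA : ∀ x, Aop e g t r Y x - Aop e g t r X x
      = Aop e g t r (fun y => Yb y * V y) x := by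
    intro x
    rw [← xt_Aop_sub e g he hg r t Y X hYs hXs]
    congr 1
    exact funext hW
  have h2 : ∀ x, Yb x * (Aop e g t r Y x - Aop e g t r X x)
      = V x * (Yb x * Aop e g t' r Yb x) := by
    intro x
    rw [hA, xt_key e g he hg r t t' Yb V hYbs hVs hYYb]
  have h3 : ∀ x, Y x * (Yb x * (Aop e g t r Y x - Aop e g t r X x)) = 0 := by
    intro x
    rw [h2]
    have : Y x * V x = 0 := by
      simp only [hV]
      linear_combination (i x * ib x) * (Aop e g t r X x + B x) * hYY x
    linear_combination Yb x * Aop e g t' r Yb x * this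
  intro x
  refine ⟨?_, ?_, h3 x⟩
  · have := hW x
    simp only [hV] at this
    linear_combination -this + (i x * ib x) * h3 x
  · rw [h2, hW]; ring

end helpers

/-- **Eqs. (4.17)–(4.20).** Reduction of the `X`-dependent terms: the correction
terms from `X = Y(1 − 𝒜)`, `X̄ = Ȳ(1 − 𝒜̄)` combine to `−2 f f̄ 𝒜 𝒜̄`, i.e.
`X̄ A X + X B̄ + B X̄ = Ȳ A Y + Y B̄ + B Ȳ − 2 f f̄ 𝒜 𝒜̄`. -/
theorem X_terms_reduction
    {Λ : Type*} [NormedCommRing Λ] [NormedAlgebra ℂ Λ]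
    (c cb B Bb f fb F Fb : (Fin 4 → ℝ) → Λ)
    (t : (Fin 4 → ℝ) → Fin 4 → ℝ) (r : (Fin 4 → ℝ) → ℝ)
    (g : (Fin 4 → ℝ) → Fin 4 → Fin 4 → ℝ) (e : (Fin 4 → ℝ) → ℝ)
    -- smoothness of all data
    (hc : ContDiff ℝ (⊤ : ℕ∞) c) (hcb : ContDiff ℝ (⊤ : ℕ∞) cb)
    (hB : ContDiff ℝ (⊤ : ℕ∞) B) (hBb : ContDiff ℝ (⊤ : ℕ∞) Bb)
    (hf : ContDiff ℝ (⊤ : ℕ∞) f) (hfb : ContDiff ℝ (⊤ : ℕ∞) fb)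
    (hF : ContDiff ℝ (⊤ : ℕ∞) F) (hFb : ContDiff ℝ (⊤ : ℕ∞) Fb)
    (ht : ContDiff ℝ (⊤ : ℕ∞) t) (hr : ContDiff ℝ (⊤ : ℕ∞) r)
    (hg : ContDiff ℝ (⊤ : ℕ∞) g) (hgsym : ∀ x μ ν, g x μ ν = g x ν μ)
    (he : ContDiff ℝ (⊤ : ℕ∞) e) (he0 : ∀ x, e x ≠ 0)
    -- nilpotency of the fermion bilinears
    (hc2 : ∀ x, c x * c x = 0) (hcb2 : ∀ x, cb x * cb x = 0)
    -- invertibility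
    (hfU : ∀ x, IsUnit (f x)) (hfbU : ∀ x, IsUnit (fb x))
    (hFU : ∀ x, IsUnit (F x)) (hFbU : ∀ x, IsUnit (Fb x))
    -- the constrained scalars X = c/(2F), X̄ = c̄/(2F̄), Y = -c/(2f), Ȳ = -c̄/(2f̄)
    (X Xb Y Yb : (Fin 4 → ℝ) → Λ)
    (hX : ∀ x, X x = (2 : ℝ)⁻¹ • (c x * Ring.inverse (F x)))
    (hXb : ∀ x, Xb x = (2 : ℝ)⁻¹ • (cb x * Ring.inverse (Fb x)))
    (hY : ∀ x, Y x = -((2 : ℝ)⁻¹ • (c x * Ring.inverse (f x))))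
    (hYb : ∀ x, Yb x = -((2 : ℝ)⁻¹ • (cb x * Ring.inverse (fb x))))
    -- the auxiliary-field equations of motion (4.7):
    -- F + f = X̄ F̄⁻¹ (A X + B) and F̄ + f̄ = X F⁻¹ (Ā X̄ + B̄)
    (heom : ∀ x, F x + f x = Xb x * Ring.inverse (Fb x) * (Aop e g t r X x + B x))
    (heomb : ∀ x, Fb x + fb x =
      X x * Ring.inverse (F x) * (Aop e g (fun y μ => -(t y μ)) r Xb x + Bb x))
    :
    ∀ x, Xb x * Aop e g t r X x + X x * Bb x + B x * Xb x
      = Yb x * Aop e g t r Y x + Y x * Bb x + B x * Yb x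
        - 2 * (f x * fb x) *
            (Ring.inverse (f x * fb x) * (Yb x * (Aop e g t r Y x + B x))) *
            (Ring.inverse (f x * fb x) *
              (Y x * (Aop e g (fun y μ => -(t y μ)) r Yb x + Bb x))) := by
  have hfi := xt_contDiff_inv f hf hfU
  have hfbi := xt_contDiff_inv fb hfb hfbU
  have hFi := xt_contDiff_inv F hF hFU
  have hFbi := xt_contDiff_inv Fb hFb hFbU
  have hXs : ContDiff ℝ (⊤ : ℕ∞) X := by
    rw [funext hX]; exact (hc.mul hFi).const_smul _
  have hXbs : ContDiff ℝ (⊤ : ℕ∞) Xb := by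
    rw [funext hXb]; exact (hcb.mul hFbi).const_smul _
  have hYs : ContDiff ℝ (⊤ : ℕ∞) Y := by
    rw [funext hY]; exact ((hc.mul hfi).const_smul _).neg
  have hYbs : ContDiff ℝ (⊤ : ℕ∞) Yb := by
    rw [funext hYb]; exact ((hcb.mul hfbi).const_smul _).neg
  have i1 : ∀ x, f x * Ring.inverse (f x) = 1 := fun x => Ring.mul_inverse_cancel _ (hfU x)
  have i2 : ∀ x, fb x * Ring.inverse (fb x) = 1 := fun x => Ring.mul_inverse_cancel _ (hfbU x)
  have i3 : ∀ x, F x * Ring.inverse (F x) = 1 := fun x => Ring.mul_inverse_cancel _ (hFU x)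
  have i4 : ∀ x, Fb x * Ring.inverse (Fb x) = 1 := fun x => Ring.mul_inverse_cancel _ (hFbU x)
  have nil : ∀ a p q : Λ, a * a = 0 →
      ((2 : ℝ)⁻¹ • (a * p)) * ((2 : ℝ)⁻¹ • (a * q)) = 0 := by
    intro a p q h
    have : a * p * (a * q) = 0 := by linear_combination p * q * h
    rw [smul_mul_smul_comm, this, smul_zero]
  have canc : ∀ a p q : Λ, p * q = 1 → ((2 : ℝ)⁻¹ • (a * q)) * p = (2 : ℝ)⁻¹ • a := by
    intro a p q h
    rw [smul_mul_assoc]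
    congr 1
    linear_combination a * h
  have hXF : ∀ x, X x * F x = - (Y x * f x) := by
    intro x
    rw [hX, hY, neg_mul, neg_neg, canc _ _ _ (i3 x), canc _ _ _ (i1 x)]
  have hXFb : ∀ x, Xb x * Fb x = - (Yb x * fb x) := by
    intro x
    rw [hXb, hYb, neg_mul, neg_neg, canc _ _ _ (i4 x), canc _ _ _ (i2 x)]
  have hXX : ∀ x, X x * X x = 0 := fun x => by rw [hX]; exact nil _ _ _ (hc2 x)
  have hXXb : ∀ x, Xb x * Xb x = 0 := fun x => by rw [hXb]; exact nil _ _ _ (hcb2 x)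
  have hYY : ∀ x, Y x * Y x = 0 := fun x => by
    rw [hY, neg_mul_neg]; exact nil _ _ _ (hc2 x)
  have hYYb : ∀ x, Yb x * Yb x = 0 := fun x => by
    rw [hYb, neg_mul_neg]; exact nil _ _ _ (hcb2 x)
  have hYX : ∀ x, Y x * X x = 0 := fun x => by
    rw [hY, hX, neg_mul, nil _ _ _ (hc2 x), neg_zero]
  have hYXb : ∀ x, Yb x * Xb x = 0 := fun x => by
    rw [hYb, hXb, neg_mul, nil _ _ _ (hcb2 x), neg_zero]
  have htn : ContDiff ℝ (⊤ : ℕ∞) (fun y μ => -(t y μ)) := ht.neg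
  have H1 := xt_half e g he hg r he0 hr t (fun y μ => -(t y μ)) ht X Xb Y Yb f fb F Fb _ _ _ B
    _ hB hXs hYs hYbs hfi hfbi i1 i2 hFU i4 hXF hXFb hYY hYX hYYb hXXb heom
    (fun x => (heomb x).trans (mul_assoc _ _ _))
  have H2 := xt_half e g he hg r he0 hr (fun y μ => -(t y μ)) t htn Xb X Yb Y fb f Fb F _ _ _ Bb
    _ hBb hXbs hYbs hYs hfbi hfi i2 i1 hFbU i3 hXFb hXF hYYb hYXb hYY hXX heomb
    (fun x => (heom x).trans (mul_assoc _ _ _))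
  intro x
  obtain ⟨a1, a2, a3⟩ := H1 x
  obtain ⟨b1, -, -⟩ := H2 x
  have hinv : Ring.inverse (f x * fb x) = Ring.inverse (f x) * Ring.inverse (fb x) := by
    rw [Ring.mul_inverse_rev, mul_comm]
  rw [hinv]
  have j1 := i1 x
  have j2 := i2 x
  generalize Ring.inverse (f x) = i at *
  generalize Ring.inverse (fb x) = ib at *
  generalize Aop e g t r X x = AX at *
  generalize Aop e g t r Y x = AY at *
  generalize Aop e g (fun y μ => -(t y μ)) r Yb x = AYb at *
  have hj : f x * fb x * (i * ib) = 1 := by linear_combination fb x * ib * j1 + j2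
  linear_combination (AX + B x) * b1 - a2 + (Bb x + AYb) * a1 + ib * i * (AYb + Bb x) * a3
    + 2 * i * ib * Yb x * (AY + B x) * Y x * (AYb + Bb x) * hj
end
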